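/- Let Z ∈ L^∞_T and (X_{i,s}) ∈ 𝓐_{n,t}(Z). Then (X_{i,s}) attains the essential supremum defining U_t(Z) if and only if the process (u_{i,s}'(X_{i,s}))_{s=t,…,T} does not depend on i ∈ {1,…,n} (i.e. u_{i,s}'(X_{i,s}) = u_{1,s}'(X_{1,s}) a.s. for all i and s) and (u_{1,s}'(X_{1,s}))_{s=t,…,T} is a martingale with respect to (𝓕_s). -/

import Mathlib

open MeasureTheory Filter

variable {Ω : Type*}

/-- `X ∈ L^∞(m)`: `m`-measurable and (essentially) bounded. -/
def MeasBdd (m : MeasurableSpace Ω) (X : Ω → ℝ) : Prop :=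
  Measurable[m] X ∧ ∃ C : ℝ, ∀ ω, |X ω| ≤ C

/-- `u` is a utility function (strictly increasing, strictly concave, `C¹`) with
derivative `u'` satisfying `u 0 = 0`, `u' 0 = 1`, `u'(+∞) = 0`, `u'(-∞) = +∞`. -/
structure IsUtility (u u' : ℝ → ℝ) : Prop where
  strictMono : StrictMono u
  strictConcave : StrictConcaveOn ℝ Set.univ u
  hasDeriv : ∀ x, HasDerivAt u (u' x) x
  derivCont : Continuous u'
  zero : u 0 = 0
  deriv_zero : u' 0 = 1
  deriv_top : Tendsto u' atTop (nhds 0)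
  deriv_bot : Tendsto u' atBot atTop

/-- A diversification of `Z` at time `t`: an adapted family `(X i s)`,
`i = 1,…,n`, `s = t,…,T`, of essentially bounded random variables summing to `Z`. -/
def IsDiv {m0 : MeasurableSpace Ω} (P : Measure Ω) (ℱ : Filtration ℕ m0)
    (n t T : ℕ) (Z : Ω → ℝ) (X : ℕ → ℕ → Ω → ℝ) : Prop :=
  (∀ i ∈ Finset.Icc 1 n, ∀ s ∈ Finset.Icc t T, MeasBdd (ℱ s) (X i s)) ∧
  ∀ᵐ ω ∂P, (∑ i ∈ Finset.Icc 1 n, ∑ s ∈ Finset.Icc t T, X i s ω) = Z ω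

/-- The total conditional expected utility `∑_{i,s} E[u_{i,s}(X_{i,s}) | 𝓕_t]`. -/
noncomputable def utilSum {m0 : MeasurableSpace Ω} (P : Measure Ω) (ℱ : Filtration ℕ m0)
    (u : ℕ → ℕ → ℝ → ℝ) (n t T : ℕ) (X : ℕ → ℕ → Ω → ℝ) : Ω → ℝ :=
  fun ω => ∑ i ∈ Finset.Icc 1 n, ∑ s ∈ Finset.Icc t T,
    (P[fun ω' => u i s (X i s ω') | ℱ t]) ω

/-!
Perturbing an optimal diversification `X` along diversifications of `0` does not increase the
expected total utility, so the derivative `D ↦ E[∑ u'(X) D]` vanishes on them. Moving a bounded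
`ℱ r`-measurable amount `H` from the slot `(i, s)` to the slot `(j, r)`, with `r ≤ s`, gives
`E[u'ᵢₛ(Xᵢₛ) H] = E[u'ⱼᵣ(Xⱼᵣ) H]`, that is, `E[u'ᵢₛ(Xᵢₛ) | ℱ r] = u'ⱼᵣ(Xⱼᵣ)`.

Conversely, suppose that the marginal utilities are all conditional expectations of a single random
variable `M`. By concavity the gain of `Y` over `X` is at most the conditional expectation of
`∑ u'(X) (Y - X)`, which by the tower property is that of `M ∑ (Y - X) = 0`.
-/

theorem concaveOn_le_add_mul_sub {S : Set ℝ} {f : ℝ → ℝ} {f' x y : ℝ} (hf : ConcaveOn ℝ S f)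
    (hx : x ∈ S) (hy : y ∈ S) (hfx : HasDerivAt f f' x) : f y ≤ f x + f' * (y - x) := by
  rcases lt_trichotomy x y with hxy | rfl | hyx
  · have hslope := hf.slope_le_of_hasDerivAt hx hy hxy hfx
    rw [slope_def_field, div_le_iff₀ (sub_pos.2 hxy)] at hslope
    linarith
  · simp
  · have hslope := hf.le_slope_of_hasDerivAt hy hx hyx hfx
    rw [slope_def_field, le_div_iff₀ (sub_pos.2 hyx)] at hslope
    linarith

theorem continuous_of_forall_hasDerivAt {f f' : ℝ → ℝ} (hf : ∀ x, HasDerivAt f (f' x) x) :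
    Continuous f :=
  Differentiable.continuous fun x => (hf x).differentiableAt

theorem exists_forall_abs_le_of_continuous {f : ℝ → ℝ} (hf : Continuous f) (C : ℝ) :
    ∃ B, ∀ x, |x| ≤ C → |f x| ≤ B := by
  obtain ⟨B, hB⟩ := (isCompact_Icc (a := -C) (b := C)).exists_bound_of_continuousOn hf.continuousOn
  exact ⟨B, fun x hx => hB x (abs_le.1 hx)⟩

namespace MeasBdd

section Algebra

variable {m m' : MeasurableSpace Ω} {X Y : Ω → ℝ}

theorem const (c : ℝ) : MeasBdd m (fun _ => c) :=
  ⟨measurable_const, |c|, fun _ => le_rfl⟩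

theorem mono (hX : MeasBdd m X) (hm : m ≤ m') : MeasBdd m' X :=
  ⟨hX.1.mono hm le_rfl, hX.2⟩

theorem continuous_comp (hX : MeasBdd m X) {f : ℝ → ℝ} (hf : Continuous f) :
    MeasBdd m (fun ω => f (X ω)) := by
  obtain ⟨hmeas, C, hC⟩ := hX
  obtain ⟨B, hB⟩ := exists_forall_abs_le_of_continuous hf C
  exact ⟨hf.measurable.comp hmeas, B, fun ω => hB _ (hC ω)⟩

theorem add (hX : MeasBdd m X) (hY : MeasBdd m Y) : MeasBdd m (fun ω => X ω + Y ω) := by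
  obtain ⟨hXmeas, C, hC⟩ := hX
  obtain ⟨hYmeas, C', hC'⟩ := hY
  exact ⟨hXmeas.add hYmeas, C + C', fun ω => (abs_add_le _ _).trans (add_le_add (hC ω) (hC' ω))⟩

theorem mul (hX : MeasBdd m X) (hY : MeasBdd m Y) : MeasBdd m (fun ω => X ω * Y ω) := by
  obtain ⟨hXmeas, C, hC⟩ := hX
  obtain ⟨hYmeas, C', hC'⟩ := hY
  refine ⟨hXmeas.mul hYmeas, C * C', fun ω => ?_⟩
  rw [abs_mul]
  exact mul_le_mul (hC ω) (hC' ω) (abs_nonneg _) ((abs_nonneg _).trans (hC ω))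

theorem indicator_one {A : Set Ω} (hA : MeasurableSet[m] A) :
    MeasBdd m (A.indicator fun _ => (1 : ℝ)) := by
  refine ⟨measurable_const.indicator hA, 1, fun ω => ?_⟩
  by_cases hω : ω ∈ A <;> simp [hω]

end Algebra

section Integral

variable {m0 : MeasurableSpace Ω} {P : Measure Ω} {X D : Ω → ℝ}

theorem integrable_mul (hX : MeasBdd m0 X) {M : Ω → ℝ} (hM : Integrable M P) :
    Integrable (fun ω => X ω * M ω) P := by
  obtain ⟨hmeas, C, hC⟩ := hX
  exact hM.bdd_mul hmeas.aestronglyMeasurable (ae_of_all _ hC)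

variable [IsFiniteMeasure P]

theorem integrable (hX : MeasBdd m0 X) : Integrable X P := by
  simpa using hX.integrable_mul (integrable_const (μ := P) (1 : ℝ))

theorem hasDerivAt_integral_comp_add_mul (hX : MeasBdd m0 X) (hD : MeasBdd m0 D)
    {f f' : ℝ → ℝ} (hf : ∀ x, HasDerivAt f (f' x) x) (hf' : Continuous f') :
    HasDerivAt (fun ε => ∫ ω, f (X ω + ε * D ω) ∂P) (∫ ω, f' (X ω) * D ω ∂P) 0 := by
  have hf_cont : Continuous f := continuous_of_forall_hasDerivAt hf
  have hline (ε : ℝ) : MeasBdd m0 (fun ω => X ω + ε * D ω) := hX.add ((const ε).mul hD)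
  obtain ⟨C, hC⟩ := hX.2
  obtain ⟨C', hC'⟩ := hD.2
  obtain ⟨B, hB⟩ := exists_forall_abs_le_of_continuous hf' (C + C')
  have hline_bound (ω : Ω) {ε : ℝ} (hε : |ε| ≤ 1) : |X ω + ε * D ω| ≤ C + C' := calc
    |X ω + ε * D ω| ≤ |X ω| + |ε| * |D ω| := by rw [← abs_mul]; exact abs_add_le _ _
    _ ≤ C + C' := add_le_add (hC ω) ((mul_le_of_le_one_left (abs_nonneg _) hε).trans (hC' ω))
  have hderiv := (hasDerivAt_integral_of_dominated_loc_of_deriv_le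
    (F := fun ε ω => f (X ω + ε * D ω)) (F' := fun ε ω => f' (X ω + ε * D ω) * D ω)
    (bound := fun _ => B * C') (μ := P) (Metric.ball_mem_nhds (0 : ℝ) one_pos)
    (.of_forall fun ε => ((hline ε).continuous_comp hf_cont).1.aestronglyMeasurable)
    ((hline 0).continuous_comp hf_cont).integrable
    (((hline 0).continuous_comp hf').mul hD).1.aestronglyMeasurable
    (ae_of_all _ fun ω ε hε => ?_) (integrable_const _) (ae_of_all _ fun ω ε _ => ?_)).2
  · simpa using hderiv
  · have hf'_bound := hB _ (hline_bound ω (mem_ball_zero_iff.1 hε).le)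
    rw [norm_mul]
    exact mul_le_mul hf'_bound (hC' ω) (abs_nonneg _) ((abs_nonneg _).trans hf'_bound)
  · have hline_deriv : HasDerivAt (fun ε => X ω + ε * D ω) (D ω) ε := by
      simpa using ((hasDerivAt_id ε).mul_const (D ω)).const_add (X ω)
    exact (hf _).comp ε hline_deriv

end Integral

end MeasBdd

theorem condExp_ae_eq_of_forall_integral_mul_eq {m m0 : MeasurableSpace Ω} {P : Measure Ω}
    (hm : m ≤ m0) [SigmaFinite (P.trim hm)] {f g : Ω → ℝ} (hf : Integrable f P)
    (hg : Integrable g P) (hgm : AEStronglyMeasurable[m] g P)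
    (hfg : ∀ H, MeasBdd m H → ∫ ω, f ω * H ω ∂P = ∫ ω, g ω * H ω ∂P) :
    P[f | m] =ᵐ[P] g := by
  refine (ae_eq_condExp_of_forall_setIntegral_eq hm hf (fun _ _ _ => hg.integrableOn)
    (fun A hA _ => ?_) hgm).symm
  have setIntegral_eq (h : Ω → ℝ) :
      ∫ ω in A, h ω ∂P = ∫ ω, h ω * A.indicator (fun _ => (1 : ℝ)) ω ∂P := by
    simp only [← integral_indicator (hm A hA), ← Set.indicator_mul_right, mul_one]
  rw [setIntegral_eq, setIntegral_eq, hfg _ (MeasBdd.indicator_one hA)]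

section DoubleSum

variable {ι κ : Type*} {I : Finset ι} {J : Finset κ}

theorem sum_sum_mul_single [DecidableEq ι] [DecidableEq κ] {R : Type*}
    [NonUnitalNonAssocSemiring R] {i : ι} {j : κ} (hi : i ∈ I) (hj : j ∈ J) (c : ι → κ → R)
    (H : Ω → R) (ω : Ω) :
    ∑ a ∈ I, ∑ b ∈ J, c a b * (Pi.single i (Pi.single j H) : ι → κ → Ω → R) a b ω =
      c i j * H ω := by
  rw [Finset.sum_eq_single_of_mem i hi, Finset.sum_eq_single_of_mem j hj]
  · simp
  · intro b _ hb
    simp [hb]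
  · intro a _ ha
    simp [ha]

variable {m m0 : MeasurableSpace Ω} {P : Measure Ω} {f g : ι → κ → Ω → ℝ}

theorem fun_sum_sum_ae_eq (hfg : ∀ i ∈ I, ∀ j ∈ J, f i j =ᵐ[P] g i j) :
    (fun ω => ∑ i ∈ I, ∑ j ∈ J, f i j ω) =ᵐ[P] fun ω => ∑ i ∈ I, ∑ j ∈ J, g i j ω := by
  have hfg_all : ∀ᵐ ω ∂P, ∀ i ∈ I, ∀ j ∈ J, f i j ω = g i j ω :=
    (Finset.eventually_all _).2 fun i hi => (Finset.eventually_all _).2 (hfg i hi)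
  filter_upwards [hfg_all] with ω hω
  exact Finset.sum_congr rfl fun i hi => Finset.sum_congr rfl (hω i hi)

theorem integrable_fun_sum_sum (hf : ∀ i ∈ I, ∀ j ∈ J, Integrable (f i j) P) :
    Integrable (fun ω => ∑ i ∈ I, ∑ j ∈ J, f i j ω) P :=
  integrable_finsetSum _ fun i hi => integrable_finsetSum _ (hf i hi)

theorem integral_fun_sum_sum (hf : ∀ i ∈ I, ∀ j ∈ J, Integrable (f i j) P) :
    ∫ ω, ∑ i ∈ I, ∑ j ∈ J, f i j ω ∂P = ∑ i ∈ I, ∑ j ∈ J, ∫ ω, f i j ω ∂P := by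
  rw [integral_finsetSum _ fun i hi => integrable_finsetSum _ (hf i hi)]
  exact Finset.sum_congr rfl fun i hi => integral_finsetSum _ (hf i hi)

theorem condExp_fun_sum_sum (hf : ∀ i ∈ I, ∀ j ∈ J, Integrable (f i j) P) :
    P[fun ω => ∑ i ∈ I, ∑ j ∈ J, f i j ω | m] =ᵐ[P]
      fun ω => ∑ i ∈ I, ∑ j ∈ J, (P[f i j | m]) ω := by
  have hsum := condExp_finsetSum (s := I ×ˢ J) (f := fun p => f p.1 p.2)
    (fun p hp => hf _ (Finset.mem_product.1 hp).1 _ (Finset.mem_product.1 hp).2) m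
  simp only [Finset.sum_product, Finset.sum_fn] at hsum
  exact hsum

end DoubleSum

section TotalUtility

/-- The total utility `∑_{i,s} u_{i,s}(X_{i,s})` of a family `X`, before taking expectations. -/
def totalUtility (u : ℕ → ℕ → ℝ → ℝ) (n t T : ℕ) (X : ℕ → ℕ → Ω → ℝ) : Ω → ℝ :=
  fun ω => ∑ i ∈ Finset.Icc 1 n, ∑ s ∈ Finset.Icc t T, u i s (X i s ω)

/-- The first variation `∑_{i,s} u_{i,s}'(X_{i,s}) D_{i,s}` of the total utility at `X` in the
direction `D`. -/
def firstVariation (u' : ℕ → ℕ → ℝ → ℝ) (n t T : ℕ) (X D : ℕ → ℕ → Ω → ℝ) : Ω → ℝ :=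
  fun ω => ∑ i ∈ Finset.Icc 1 n, ∑ s ∈ Finset.Icc t T, u' i s (X i s ω) * D i s ω

variable {u u' : ℕ → ℕ → ℝ → ℝ} {n t T : ℕ} {X D E : ℕ → ℕ → Ω → ℝ}

theorem firstVariation_single {i s : ℕ} (hi : i ∈ Finset.Icc 1 n) (hs : s ∈ Finset.Icc t T)
    (H : Ω → ℝ) :
    firstVariation u' n t T X (Pi.single i (Pi.single s H)) =
      fun ω => u' i s (X i s ω) * H ω :=
  funext fun ω => sum_sum_mul_single hi hs (fun a b => u' a b (X a b ω)) H ω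

theorem firstVariation_sub :
    firstVariation u' n t T X (D - E) =
      firstVariation u' n t T X D - firstVariation u' n t T X E := by
  ext ω
  simp only [firstVariation, Pi.sub_apply, mul_sub, Finset.sum_sub_distrib]

theorem totalUtility_le_add_firstVariation
    (hconc : ∀ i s, ConcaveOn ℝ Set.univ (u i s))
    (hderiv : ∀ i s x, HasDerivAt (u i s) (u' i s x) x) (Y : ℕ → ℕ → Ω → ℝ) (ω : Ω) :
    totalUtility u n t T Y ω ≤
      totalUtility u n t T X ω + firstVariation u' n t T X (Y - X) ω := by
  simp only [totalUtility, firstVariation, ← Finset.sum_add_distrib]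
  gcongr with i _ s _
  exact concaveOn_le_add_mul_sub (hconc i s) (Set.mem_univ _) (Set.mem_univ _) (hderiv i s _)

end TotalUtility

section Diversification

variable {m0 : MeasurableSpace Ω} {P : Measure Ω} {ℱ : Filtration ℕ m0} {n t T : ℕ}
  {Z W : Ω → ℝ} {X Y D E : ℕ → ℕ → Ω → ℝ} {u u' : ℕ → ℕ → ℝ → ℝ}

/-- The conditional expected utility of `X` almost surely dominates that of every diversification of
`Z` at time `t`. That `X` is itself a diversification of `Z` is not part of the definition. -/
def IsOptimal (P : Measure Ω) (ℱ : Filtration ℕ m0) (u : ℕ → ℕ → ℝ → ℝ) (n t T : ℕ) (Z : Ω → ℝ)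
    (X : ℕ → ℕ → Ω → ℝ) : Prop :=
  ∀ Y : ℕ → ℕ → Ω → ℝ, IsDiv P ℱ n t T Z Y → utilSum P ℱ u n t T Y ≤ᵐ[P] utilSum P ℱ u n t T X

namespace IsDiv

theorem measBdd (hX : IsDiv P ℱ n t T Z X) {i s : ℕ} (hi : i ∈ Finset.Icc 1 n)
    (hs : s ∈ Finset.Icc t T) : MeasBdd m0 (X i s) :=
  (hX.1 i hi s hs).mono (ℱ.le s)

theorem add_smul (hX : IsDiv P ℱ n t T Z X) (hD : IsDiv P ℱ n t T W D) (ε : ℝ) :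
    IsDiv P ℱ n t T (Z + ε • W) (X + ε • D) := by
  refine ⟨fun i hi s hs => (hX.1 i hi s hs).add ((MeasBdd.const ε).mul (hD.1 i hi s hs)), ?_⟩
  filter_upwards [hX.2, hD.2] with ω hXω hDω
  simp only [Pi.add_apply, Pi.smul_apply, smul_eq_mul, Finset.sum_add_distrib, ← Finset.mul_sum,
    hXω, hDω]

theorem sub (hX : IsDiv P ℱ n t T Z X) (hD : IsDiv P ℱ n t T W D) :
    IsDiv P ℱ n t T (Z - W) (X - D) := by
  simpa [sub_eq_add_neg] using hX.add_smul hD (-1)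

theorem single {i s : ℕ} (hi : i ∈ Finset.Icc 1 n) (hs : s ∈ Finset.Icc t T) {H : Ω → ℝ}
    (hH : MeasBdd (ℱ s) H) : IsDiv P ℱ n t T H (Pi.single i (Pi.single s H)) := by
  refine ⟨fun a _ b _ => ?_, ae_of_all _ fun ω => ?_⟩
  · have hzero : MeasBdd (ℱ b) (0 : Ω → ℝ) := MeasBdd.const 0
    rcases eq_or_ne a i with rfl | ha
    · rcases eq_or_ne b s with rfl | hb
      · simpa using hH
      · simpa [hb] using hzero
    · simpa [ha] using hzero
  · simpa using sum_sum_mul_single hi hs (fun _ _ => 1) H ω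

variable [IsFiniteMeasure P]

theorem condExp_sum_condExp_mul (hD : IsDiv P ℱ n t T W D) {M : Ω → ℝ} (hM : Integrable M P) :
    P[fun ω => ∑ i ∈ Finset.Icc 1 n, ∑ s ∈ Finset.Icc t T, D i s ω * (P[M | ℱ s]) ω | ℱ t]
      =ᵐ[P] P[fun ω => W ω * M ω | ℱ t] := by
  have htower : ∀ i ∈ Finset.Icc 1 n, ∀ s ∈ Finset.Icc t T,
      P[fun ω => D i s ω * (P[M | ℱ s]) ω | ℱ t] =ᵐ[P] P[fun ω => D i s ω * M ω | ℱ t] := by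
    intro i hi s hs
    have hpull : P[fun ω => D i s ω * M ω | ℱ s] =ᵐ[P] fun ω => D i s ω * (P[M | ℱ s]) ω :=
      condExp_mul_of_stronglyMeasurable_left (hD.1 i hi s hs).1.stronglyMeasurable
        ((hD.measBdd hi hs).integrable_mul hM) hM
    exact (condExp_congr_ae hpull).symm.trans
      (condExp_condExp_of_le (ℱ.mono (Finset.mem_Icc.1 hs).1) (ℱ.le s))
  have hsum : (fun ω => ∑ i ∈ Finset.Icc 1 n, ∑ s ∈ Finset.Icc t T, D i s ω * M ω)
      =ᵐ[P] fun ω => W ω * M ω := by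
    filter_upwards [hD.2] with ω hDω
    simp only [← Finset.sum_mul, hDω]
  calc
    P[fun ω => ∑ i ∈ Finset.Icc 1 n, ∑ s ∈ Finset.Icc t T, D i s ω * (P[M | ℱ s]) ω | ℱ t]
    _ =ᵐ[P] fun ω => ∑ i ∈ Finset.Icc 1 n, ∑ s ∈ Finset.Icc t T,
        (P[fun ω => D i s ω * (P[M | ℱ s]) ω | ℱ t]) ω :=
      condExp_fun_sum_sum fun i hi s hs => (hD.measBdd hi hs).integrable_mul integrable_condExp
    _ =ᵐ[P] fun ω => ∑ i ∈ Finset.Icc 1 n, ∑ s ∈ Finset.Icc t T,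
        (P[fun ω => D i s ω * M ω | ℱ t]) ω := fun_sum_sum_ae_eq htower
    _ =ᵐ[P] P[fun ω => ∑ i ∈ Finset.Icc 1 n, ∑ s ∈ Finset.Icc t T, D i s ω * M ω | ℱ t] :=
      (condExp_fun_sum_sum fun i hi s hs => (hD.measBdd hi hs).integrable_mul hM).symm
    _ =ᵐ[P] P[fun ω => W ω * M ω | ℱ t] := condExp_congr_ae hsum

theorem integrable_comp (hX : IsDiv P ℱ n t T Z X) {i s : ℕ} (hi : i ∈ Finset.Icc 1 n)
    (hs : s ∈ Finset.Icc t T) {f : ℝ → ℝ} (hf : Continuous f) :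
    Integrable (fun ω => f (X i s ω)) P :=
  ((hX.measBdd hi hs).continuous_comp hf).integrable

theorem integrable_totalUtility (hX : IsDiv P ℱ n t T Z X) (hu : ∀ i s, Continuous (u i s)) :
    Integrable (totalUtility u n t T X) P :=
  integrable_fun_sum_sum fun _ hi _ hs => hX.integrable_comp hi hs (hu _ _)

theorem utilSum_ae_eq_condExp_totalUtility (hX : IsDiv P ℱ n t T Z X)
    (hu : ∀ i s, Continuous (u i s)) :
    utilSum P ℱ u n t T X =ᵐ[P] P[totalUtility u n t T X | ℱ t] :=
  (condExp_fun_sum_sum fun _ hi _ hs => hX.integrable_comp hi hs (hu _ _)).symm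

theorem integrable_deriv_mul (hX : IsDiv P ℱ n t T Z X) (hD : IsDiv P ℱ n t T W D)
    (hcont : ∀ i s, Continuous (u' i s)) {i s : ℕ} (hi : i ∈ Finset.Icc 1 n)
    (hs : s ∈ Finset.Icc t T) : Integrable (fun ω => u' i s (X i s ω) * D i s ω) P :=
  (((hX.measBdd hi hs).continuous_comp (hcont i s)).mul (hD.measBdd hi hs)).integrable

theorem integrable_firstVariation (hX : IsDiv P ℱ n t T Z X) (hD : IsDiv P ℱ n t T W D)
    (hcont : ∀ i s, Continuous (u' i s)) : Integrable (firstVariation u' n t T X D) P :=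
  integrable_fun_sum_sum fun _ hi _ hs => hX.integrable_deriv_mul hD hcont hi hs

theorem hasDerivAt_integral_totalUtility (hX : IsDiv P ℱ n t T Z X) (hD : IsDiv P ℱ n t T W D)
    (hderiv : ∀ i s x, HasDerivAt (u i s) (u' i s x) x) (hcont : ∀ i s, Continuous (u' i s)) :
    HasDerivAt (fun ε : ℝ => ∫ ω, totalUtility u n t T (X + ε • D) ω ∂P)
      (∫ ω, firstVariation u' n t T X D ω ∂P) 0 := by
  have hu (i s : ℕ) : Continuous (u i s) := continuous_of_forall_hasDerivAt (hderiv i s)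
  have integral_totalUtility (ε : ℝ) : ∫ ω, totalUtility u n t T (X + ε • D) ω ∂P =
      ∑ i ∈ Finset.Icc 1 n, ∑ s ∈ Finset.Icc t T, ∫ ω, u i s (X i s ω + ε * D i s ω) ∂P :=
    integral_fun_sum_sum fun i hi s hs => (hX.add_smul hD ε).integrable_comp hi hs (hu i s)
  have integral_firstVariation : ∫ ω, firstVariation u' n t T X D ω ∂P =
      ∑ i ∈ Finset.Icc 1 n, ∑ s ∈ Finset.Icc t T, ∫ ω, u' i s (X i s ω) * D i s ω ∂P :=
    integral_fun_sum_sum fun i hi s hs => hX.integrable_deriv_mul hD hcont hi hs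
  simp only [integral_totalUtility, integral_firstVariation]
  exact HasDerivAt.fun_sum fun i hi => HasDerivAt.fun_sum fun s hs =>
    (hX.measBdd hi hs).hasDerivAt_integral_comp_add_mul (hD.measBdd hi hs) (hderiv i s) (hcont i s)

theorem isOptimal_of_condExp_ae_eq_deriv (hX : IsDiv P ℱ n t T Z X)
    (hconc : ∀ i s, ConcaveOn ℝ Set.univ (u i s))
    (hderiv : ∀ i s x, HasDerivAt (u i s) (u' i s x) x) (hcont : ∀ i s, Continuous (u' i s))
    {M : Ω → ℝ} (hM : Integrable M P)
    (hMX : ∀ i ∈ Finset.Icc 1 n, ∀ s ∈ Finset.Icc t T,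
      P[M | ℱ s] =ᵐ[P] fun ω => u' i s (X i s ω)) :
    IsOptimal P ℱ u n t T Z X := by
  intro Y hY
  have hu (i s : ℕ) : Continuous (u i s) := continuous_of_forall_hasDerivAt (hderiv i s)
  have hvar : firstVariation u' n t T X (Y - X) =ᵐ[P] fun ω =>
      ∑ i ∈ Finset.Icc 1 n, ∑ s ∈ Finset.Icc t T, (Y - X) i s ω * (P[M | ℱ s]) ω :=
    fun_sum_sum_ae_eq fun i hi s hs => by
      filter_upwards [hMX i hi s hs] with ω hω
      rw [hω, mul_comm]
  have hvar_zero : P[firstVariation u' n t T X (Y - X) | ℱ t] =ᵐ[P] 0 := by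
    have hcond := (condExp_congr_ae hvar).trans ((hY.sub hX).condExp_sum_condExp_mul hM)
    simpa [← Pi.zero_def, condExp_zero] using hcond
  have hX_int := hX.integrable_totalUtility (P := P) hu
  have hvar_int := hX.integrable_firstVariation (hY.sub hX) hcont
  have hle := condExp_mono (m := ℱ t) (hY.integrable_totalUtility hu) (hX_int.add hvar_int)
    (ae_of_all P (totalUtility_le_add_firstVariation hconc hderiv Y))
  filter_upwards [hle, condExp_add hX_int hvar_int (ℱ t), hvar_zero,
    hX.utilSum_ae_eq_condExp_totalUtility hu, hY.utilSum_ae_eq_condExp_totalUtility hu]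
    with ω hle hadd hzero hXω hYω
  simpa [hXω, hYω, hadd, hzero] using hle

end IsDiv

namespace IsOptimal

variable [IsFiniteMeasure P]

theorem integral_totalUtility_le (hopt : IsOptimal P ℱ u n t T Z X)
    (hX : IsDiv P ℱ n t T Z X) (hY : IsDiv P ℱ n t T Z Y) (hu : ∀ i s, Continuous (u i s)) :
    ∫ ω, totalUtility u n t T Y ω ∂P ≤ ∫ ω, totalUtility u n t T X ω ∂P := by
  rw [← integral_condExp (ℱ.le t), ← integral_condExp (ℱ.le t) (f := totalUtility u n t T X)]
  refine integral_mono_ae integrable_condExp integrable_condExp ?_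
  exact (hY.utilSum_ae_eq_condExp_totalUtility hu).symm.trans_le
    ((hopt Y hY).trans_eq (hX.utilSum_ae_eq_condExp_totalUtility hu))

theorem integral_firstVariation_eq_zero (hopt : IsOptimal P ℱ u n t T Z X)
    (hX : IsDiv P ℱ n t T Z X) (hderiv : ∀ i s x, HasDerivAt (u i s) (u' i s x) x)
    (hcont : ∀ i s, Continuous (u' i s)) (hD : IsDiv P ℱ n t T 0 D) :
    ∫ ω, firstVariation u' n t T X D ω ∂P = 0 := by
  have hu (i s : ℕ) : Continuous (u i s) := continuous_of_forall_hasDerivAt (hderiv i s)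
  have hline (ε : ℝ) : IsDiv P ℱ n t T Z (X + ε • D) := by simpa using hX.add_smul hD ε
  have hmax : IsLocalMax (fun ε : ℝ => ∫ ω, totalUtility u n t T (X + ε • D) ω ∂P) 0 :=
    .of_forall fun ε => by simpa using hopt.integral_totalUtility_le hX (hline ε) hu
  exact hmax.hasDerivAt_eq_zero (hX.hasDerivAt_integral_totalUtility hD hderiv hcont)

theorem integral_firstVariation_eq (hopt : IsOptimal P ℱ u n t T Z X)
    (hX : IsDiv P ℱ n t T Z X) (hderiv : ∀ i s x, HasDerivAt (u i s) (u' i s x) x)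
    (hcont : ∀ i s, Continuous (u' i s)) (hD : IsDiv P ℱ n t T W D) (hE : IsDiv P ℱ n t T W E) :
    ∫ ω, firstVariation u' n t T X D ω ∂P = ∫ ω, firstVariation u' n t T X E ω ∂P := by
  have hDE : IsDiv P ℱ n t T 0 (D - E) := by simpa using hD.sub hE
  have hzero := hopt.integral_firstVariation_eq_zero hX hderiv hcont hDE
  rw [firstVariation_sub, integral_sub' (hX.integrable_firstVariation hD hcont)
    (hX.integrable_firstVariation hE hcont)] at hzero
  exact sub_eq_zero.1 hzero

theorem condExp_deriv_ae_eq (hopt : IsOptimal P ℱ u n t T Z X) (hX : IsDiv P ℱ n t T Z X)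
    (hderiv : ∀ i s x, HasDerivAt (u i s) (u' i s x) x) (hcont : ∀ i s, Continuous (u' i s))
    {i j r s : ℕ} (hi : i ∈ Finset.Icc 1 n) (hj : j ∈ Finset.Icc 1 n) (hr : r ∈ Finset.Icc t T)
    (hs : s ∈ Finset.Icc t T) (hrs : r ≤ s) :
    P[fun ω => u' i s (X i s ω) | ℱ r] =ᵐ[P] fun ω => u' j r (X j r ω) := by
  have hmeas : AEStronglyMeasurable[ℱ r] (fun ω => u' j r (X j r ω)) P :=
    ((hX.1 j hj r hr).continuous_comp (hcont j r)).1.stronglyMeasurable.aestronglyMeasurable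
  refine condExp_ae_eq_of_forall_integral_mul_eq (ℱ.le r) (hX.integrable_comp hi hs (hcont i s))
    (hX.integrable_comp hj hr (hcont j r)) hmeas fun H hH => ?_
  have htransfer := hopt.integral_firstVariation_eq hX hderiv hcont
    (IsDiv.single hi hs (hH.mono (ℱ.mono hrs))) (IsDiv.single hj hr hH)
  rwa [firstVariation_single hi hs, firstVariation_single hj hr] at htransfer

end IsOptimal

end Diversification

theorem maximizer_iff_marginal_utility_martingale_general
    {m0 : MeasurableSpace Ω} (P : Measure Ω) [IsFiniteMeasure P]
    (ℱ : Filtration ℕ m0) (T n t : ℕ) (hn : 0 < n) (ht : t ≤ T)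
    (u u' : ℕ → ℕ → ℝ → ℝ) (hconc : ∀ i s, ConcaveOn ℝ Set.univ (u i s))
    (hderiv : ∀ i s x, HasDerivAt (u i s) (u' i s x) x) (hcont : ∀ i s, Continuous (u' i s))
    (Z : Ω → ℝ) (X : ℕ → ℕ → Ω → ℝ) (hX : IsDiv P ℱ n t T Z X) :
    IsOptimal P ℱ u n t T Z X ↔
      (∀ i ∈ Finset.Icc 1 n, ∀ s ∈ Finset.Icc t T,
        (fun ω => u' i s (X i s ω)) =ᵐ[P] fun ω => u' 1 s (X 1 s ω)) ∧
      (∀ r ∈ Finset.Icc t T, ∀ s ∈ Finset.Icc t T, r ≤ s →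
        P[fun ω => u' 1 s (X 1 s ω) | ℱ r] =ᵐ[P] fun ω => u' 1 r (X 1 r ω)) := by
  have h1 : 1 ∈ Finset.Icc 1 n := Finset.mem_Icc.2 ⟨le_rfl, hn⟩
  have hT : T ∈ Finset.Icc t T := Finset.mem_Icc.2 ⟨ht, le_rfl⟩
  constructor
  · intro hopt
    have hcond {i j r s : ℕ} (hi : i ∈ Finset.Icc 1 n) (hj : j ∈ Finset.Icc 1 n) :=
      hopt.condExp_deriv_ae_eq hX hderiv hcont hi hj (r := r) (s := s)
    exact ⟨fun i hi s hs => (hcond h1 hi hs hs le_rfl).symm.trans (hcond h1 h1 hs hs le_rfl),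
      fun r hr s hs hrs => hcond h1 h1 hr hs hrs⟩
  · rintro ⟨hindep, hmart⟩
    exact hX.isOptimal_of_condExp_ae_eq_deriv hconc hderiv hcont
      (hX.integrable_comp h1 hT (hcont 1 T)) fun i hi s hs =>
        (hmart s hs T hT (Finset.mem_Icc.1 hs).2).trans (hindep i hi s hs).symm

/-- Theorem 2.15: a diversification `(X_{i,s})` of `Z` attains the
essential supremum defining `U_t(Z)` iff the marginal utilities `u_{i,s}'(X_{i,s})` do not
depend on `i` and `(u_{1,s}'(X_{1,s}))_{s=t,…,T}` is a martingale. -/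
theorem maximizer_iff_marginal_utility_martingale
    {m0 : MeasurableSpace Ω} (P : Measure Ω) [IsProbabilityMeasure P]
    (ℱ : Filtration ℕ m0) (T n t : ℕ) (hT : 0 < T) (hn : 0 < n) (ht : t ≤ T)
    (u u' : ℕ → ℕ → ℝ → ℝ) (hu : ∀ i s, IsUtility (u i s) (u' i s))
    (Z : Ω → ℝ) (hZ : MeasBdd (ℱ T) Z)
    (X : ℕ → ℕ → Ω → ℝ) (hX : IsDiv P ℱ n t T Z X) :
    -- `X` attains the essential supremum defining `U_t(Z)` …
    (∀ Y : ℕ → ℕ → Ω → ℝ, IsDiv P ℱ n t T Z Y →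
      utilSum P ℱ u n t T Y ≤ᵐ[P] utilSum P ℱ u n t T X)
    ↔
    -- … iff `u'_{i,s}(X_{i,s})` does not depend on `i` …
    ((∀ i ∈ Finset.Icc 1 n, ∀ s ∈ Finset.Icc t T,
        (fun ω => u' i s (X i s ω)) =ᵐ[P] fun ω => u' 1 s (X 1 s ω)) ∧
      -- … and `(u'_{1,s}(X_{1,s}))_{s=t,…,T}` is a martingale w.r.t. `(ℱ s)`:
      (∀ r ∈ Finset.Icc t T, ∀ s ∈ Finset.Icc t T, r ≤ s →
        (P[fun ω => u' 1 s (X 1 s ω) | ℱ r]) =ᵐ[P] fun ω => u' 1 r (X 1 r ω))) :=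
  maximizer_iff_marginal_utility_martingale_general P ℱ T n t hn ht u u'
    (fun i s => (hu i s).strictConcave.concaveOn) (fun i s => (hu i s).hasDeriv)
    (fun i s => (hu i s).derivCont) Z X hX
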